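/- arXiv:2005.00601 — 3 statements merged into one kernel-verified Lean document; each statement's English description precedes it below -/
import Mathlib

section
/- Let k ≥ 1 be an integer and let ω = exp(2πi/k) ∈ ℂ. A complex n×n matrix A is a sum of finitely many (k+1)-potent matrices if and only if there exists a polynomial F with nonnegative integer coefficients and degree at most k−1 such that tr(A) = F(ω) and F(1) ≥ rank(A). -/
open Polynomial Matrix

/-!
Let `S` be the additive monoid of sums of `(k + 1)`-potent matrices over a field containing a
primitive `k`-th root of unity `ω`.

Necessity: a `(k + 1)`-potent `E` is `∑ j < k, ω ^ j • P j` with `P j` idempotent (a discrete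
Fourier transform of the powers of `E`), and `tr (P j) = rank (P j)`, so
`F = ∑ j, rank (P j) X ^ j` works for `E`; the conditions on `F` are additive.

Sufficiency when `-1` is a sum of `k`-th roots of unity: `S` contains the negatives of idempotents,
hence all square-zero matrices `x yᵀ` (differences of two idempotents). Modulo these, every matrix
is congruent to a multiple of a rank one idempotent `P`, so `A - tr A • P` lies in `S`, and so does
`tr A • P` because `tr A` is a sum of roots of unity.

Otherwise `k = 1` and the characteristic is zero, and one subtracts rank one idempotents from `A`,
lowering the trace `N` by one while keeping `rank ≤ trace`. Only `rank A = N` needs the rank to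
drop. By Wedderburn's rank reduction it does for the idempotent `A u vᵀ A` when
`vᵀ A u = vᵀ A² u = 1`, and such `u`, `v` exist unless `A` acts on its range as a scalar; that
scalar is `1` by the trace condition, and then `A` is itself idempotent.
-/

section PotentSums

/-- The additive monoid of finite sums of `(k + 1)`-potent elements of `R`. For a field this is the
monoid of finite sums of `k`-th roots of unity, which serves as the set of admissible traces. -/
def potentSums (R : Type*) [Semiring R] (k : ℕ) : AddSubmonoid R :=
  AddSubmonoid.closure {a | a ^ (k + 1) = a}

section Semiring

variable {R : Type*} [Semiring R] {k : ℕ} {a : R}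

theorem mem_potentSums_of_pow_succ_eq (ha : a ^ (k + 1) = a) : a ∈ potentSums R k :=
  AddSubmonoid.subset_closure ha

theorem mem_potentSums_iff :
    a ∈ potentSums R k ↔ ∃ (m : ℕ) (e : Fin m → R), (∀ i, e i ^ (k + 1) = e i) ∧ a = ∑ i, e i := by
  constructor
  · intro ha
    obtain ⟨l, hl, rfl⟩ := AddSubmonoid.exists_list_of_mem_closure ha
    exact ⟨l.length, l.get, fun i => hl _ (l.get_mem i), by simp [← List.sum_ofFn]⟩
  · rintro ⟨m, e, he, rfl⟩
    exact sum_mem fun i _ => mem_potentSums_of_pow_succ_eq (he i)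

theorem mem_potentSums_of_pow_eq_one (ha : a ^ k = 1) : a ∈ potentSums R k :=
  mem_potentSums_of_pow_succ_eq (by rw [pow_succ, ha, one_mul])

theorem mem_potentSums_of_isIdempotentElem (ha : IsIdempotentElem a) : a ∈ potentSums R k :=
  mem_potentSums_of_pow_succ_eq (ha.pow_succ_eq k)

theorem smul_mem_potentSums {K : Type*} [CommSemiring K] [Algebra K R] {c : K}
    (hc : c ∈ potentSums K k) (ha : IsIdempotentElem a) : c • a ∈ potentSums R k := by
  induction hc using AddSubmonoid.closure_induction with
  | mem c hc =>
    exact mem_potentSums_of_pow_succ_eq (by rw [_root_.smul_pow, ha.pow_succ_eq, hc])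
  | zero => simp
  | add c d _ _ hc hd => simpa only [add_smul] using add_mem hc hd

end Semiring

theorem aeval_mem_potentSums {R : Type*} [CommSemiring R] {k : ℕ} {c : R} (hc : c ^ k = 1)
    (F : ℕ[X]) : aeval c F ∈ potentSums R k := by
  rw [aeval_eq_sum_range]
  refine sum_mem fun j _ => nsmul_mem (mem_potentSums_of_pow_eq_one ?_) _
  rw [pow_right_comm, hc, one_pow]

theorem neg_one_mem_potentSums_of_isPrimitiveRoot {R : Type*} [CommRing R] [IsDomain R] {k : ℕ}
    {ω : R} (hω : IsPrimitiveRoot ω k) (hk : 1 < k) : -1 ∈ potentSums R k := by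
  have hsum : ∑ j ∈ Finset.range (k - 1), ω ^ (j + 1) = -1 := by
    have h := hω.geom_sum_eq_zero hk
    rw [← Nat.sub_add_cancel hk.le, Finset.sum_range_succ', pow_zero] at h
    exact eq_neg_of_add_eq_zero_left h
  rw [← hsum]
  refine sum_mem fun j _ => mem_potentSums_of_pow_eq_one ?_
  rw [pow_right_comm, hω.pow_eq_one, one_pow]

theorem neg_one_mem_potentSums_of_charP (R : Type*) [Ring R] (p k : ℕ) [CharP R p] [NeZero p] :
    -1 ∈ potentSums R k := by
  have hcast : ((p - 1 : ℕ) : R) = -1 := by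
    rw [Nat.cast_pred (NeZero.pos p), CharP.cast_eq_zero, zero_sub]
  rw [← hcast, ← nsmul_one]
  exact nsmul_mem (mem_potentSums_of_pow_eq_one (one_pow k)) _

end PotentSums

section CyclicMean

variable {K R : Type*} [Field K] [Ring R] [Algebra K R] {k : ℕ} {a : R}

/-- The mean of `a, a ^ 2, …, a ^ k`. When `a ^ (k + 1) = a` it is the idempotent cutting out the
eigenvalue `1` of `a`; applied to `(ω ^ j)⁻¹ • a` it gives the one for the eigenvalue `ω ^ j`. -/
def cyclicMean (K : Type*) {R : Type*} [Field K] [Ring R] [Algebra K R] (k : ℕ) (a : R) : R :=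
  (k : K)⁻¹ • ∑ m ∈ Finset.range k, a ^ (m + 1)

theorem mul_cyclicMean (ha : a ^ (k + 1) = a) : a * cyclicMean K k a = cyclicMean K k a := by
  have hshift : ∑ m ∈ Finset.range k, a ^ (m + 2) = ∑ m ∈ Finset.range k, a ^ (m + 1) := by
    have h := (Finset.sum_range_succ' (fun m => a ^ (m + 1)) k).symm.trans
      (Finset.sum_range_succ (fun m => a ^ (m + 1)) k)
    simpa only [zero_add, pow_one, ha, add_left_inj] using h
  simp only [cyclicMean, mul_smul_comm, Finset.mul_sum, ← pow_succ', hshift]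

theorem isIdempotentElem_cyclicMean (hk : (k : K) ≠ 0) (ha : a ^ (k + 1) = a) :
    IsIdempotentElem (cyclicMean K k a) := by
  have hpow (m : ℕ) : a ^ m * cyclicMean K k a = cyclicMean K k a := by
    induction m with
    | zero => rw [pow_zero, one_mul]
    | succ m ih => rw [pow_succ, mul_assoc, mul_cyclicMean ha, ih]
  calc cyclicMean K k a * cyclicMean K k a
      = (k : K)⁻¹ • ∑ m ∈ Finset.range k, a ^ (m + 1) * cyclicMean K k a := by
        rw [← Finset.sum_mul, ← smul_mul_assoc, ← cyclicMean]
    _ = cyclicMean K k a := by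
        simp only [hpow, Finset.sum_const, Finset.card_range, ← Nat.cast_smul_eq_nsmul K,
          inv_smul_smul₀ hk]

theorem sum_inv_pow_pow_eq_ite {ω : K} (hω : IsPrimitiveRoot ω k) {m : ℕ} (hm : m < k) :
    ∑ j ∈ Finset.range k, (ω⁻¹ ^ m) ^ j = if m = 0 then (k : K) else 0 := by
  split_ifs with hm0
  · simp [hm0]
  · have hne : ω⁻¹ ^ m ≠ 1 := hω.inv.pow_ne_one_of_pos_of_lt hm0 hm
    rw [geom_sum_eq hne, pow_right_comm, hω.inv.pow_eq_one, one_pow, sub_self, zero_div]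

theorem sum_smul_cyclicMean {ω : K} (hω : IsPrimitiveRoot ω k) (hk : k ≠ 0) (a : R) :
    ∑ j ∈ Finset.range k, ω ^ j • cyclicMean K k ((ω ^ j)⁻¹ • a) = a := by
  have : NeZero k := ⟨hk⟩
  have hkK : (k : K) ≠ 0 := hω.neZero'.ne
  have hω0 : ω ≠ 0 := hω.ne_zero hk
  have hcoeff (j m : ℕ) : ω ^ j * (ω ^ j)⁻¹ ^ (m + 1) = (ω⁻¹ ^ m) ^ j := by
    rw [pow_succ', mul_inv_cancel_left₀ (pow_ne_zero j hω0), ← inv_pow, pow_right_comm]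
  calc ∑ j ∈ Finset.range k, ω ^ j • cyclicMean K k ((ω ^ j)⁻¹ • a)
      = (k : K)⁻¹ • ∑ m ∈ Finset.range k,
          (∑ j ∈ Finset.range k, (ω⁻¹ ^ m) ^ j) • a ^ (m + 1) := by
        simp only [cyclicMean, smul_comm _ (k : K)⁻¹, ← Finset.smul_sum, _root_.smul_pow,
          Finset.sum_smul, ← hcoeff, mul_smul]
        rw [Finset.sum_comm]
        simp only [Finset.smul_sum]
    _ = (k : K)⁻¹ • ∑ m ∈ Finset.range k, (if m = 0 then (k : K) else 0) • a ^ (m + 1) := by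
        congr 1
        refine Finset.sum_congr rfl fun m hm => ?_
        rw [sum_inv_pow_pow_eq_ite hω (Finset.mem_range.mp hm)]
    _ = a := by
        simp [ite_smul, hk, hkK]

theorem exists_isIdempotentElem_sum_smul_eq {ω : K} (hω : IsPrimitiveRoot ω k) (hk : k ≠ 0)
    (ha : a ^ (k + 1) = a) :
    ∃ p : ℕ → R, (∀ j, IsIdempotentElem (p j)) ∧ ∑ j ∈ Finset.range k, ω ^ j • p j = a := by
  have : NeZero k := ⟨hk⟩
  refine ⟨_, fun j => isIdempotentElem_cyclicMean hω.neZero'.ne ?_, sum_smul_cyclicMean hω hk a⟩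
  rw [_root_.smul_pow, ha, pow_succ, inv_pow, pow_right_comm, hω.pow_eq_one, one_pow, inv_one,
    one_mul]

end CyclicMean

section Rank

variable {K m n : Type*} [Field K] [Fintype n]

theorem matrix_rank_add_le [Finite m] (A B : Matrix m n K) : (A + B).rank ≤ A.rank + B.rank := by
  rw [Matrix.rank, Matrix.mulVecLin_add]
  exact (Submodule.finrank_mono (LinearMap.range_add_le _ _)).trans
    (Submodule.finrank_add_le_finrank_add_finrank _ _)

theorem matrix_rank_sum_le [Finite m] {ι : Type*} (s : Finset ι) (A : ι → Matrix m n K) :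
    (∑ i ∈ s, A i).rank ≤ ∑ i ∈ s, (A i).rank :=
  Finset.le_sum_of_subadditive _ Matrix.rank_zero.le matrix_rank_add_le s A

theorem matrix_rank_eq_zero [Finite m] {A : Matrix m n K} : A.rank = 0 ↔ A = 0 := by
  classical
  rw [Matrix.rank, Submodule.finrank_eq_zero, LinearMap.range_eq_bot, ← Matrix.toLin'_apply',
    LinearEquiv.map_eq_zero_iff]

theorem rank_sub_vecMulVec_lt [Fintype m] (A : Matrix m n K) {u : n → K} {v : m → K}
    (huv : v ⬝ᵥ (A *ᵥ u) = 1) : (A - vecMulVec (A *ᵥ u) (v ᵥ* A)).rank < A.rank := by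
  set B := A - vecMulVec (A *ᵥ u) (v ᵥ* A) with hB
  have hBx (x : n → K) : B *ᵥ x = A *ᵥ x - (v ⬝ᵥ (A *ᵥ x)) • (A *ᵥ u) := by
    simp [hB, sub_mulVec, vecMulVec_mulVec, ← dotProduct_mulVec]
  have hker : LinearMap.ker A.mulVecLin < LinearMap.ker B.mulVecLin := by
    refine SetLike.lt_iff_le_and_exists.mpr ⟨fun x hx => ?_, u, ?_, fun hu => ?_⟩
    · rw [LinearMap.mem_ker, mulVecLin_apply] at hx ⊢
      simp [hBx, hx]
    · rw [LinearMap.mem_ker, mulVecLin_apply, hBx, huv, one_smul, sub_self]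
    · rw [LinearMap.mem_ker, mulVecLin_apply] at hu
      simp [hu] at huv
  have hlt := Submodule.finrank_lt_finrank_of_lt hker
  have hA := LinearMap.finrank_range_add_finrank_ker A.mulVecLin
  have hB := LinearMap.finrank_range_add_finrank_ker B.mulVecLin
  rw [Matrix.rank, Matrix.rank]
  lia

theorem exists_forall_dotProduct_eq {ι : Type*} {x : ι → n → K}
    (hx : LinearIndependent K x) (c : ι → K) : ∃ y : n → K, ∀ i, y ⬝ᵥ x i = c i := by
  have := hx.finite
  cases nonempty_fintype ι
  have hrange : LinearMap.range (of x).mulVecLin = ⊤ := by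
    refine Submodule.eq_top_of_finrank_eq ?_
    rw [Module.finrank_fintype_fun_eq_card]
    exact LinearIndependent.rank_matrix hx
  obtain ⟨y, hy⟩ := LinearMap.range_eq_top.mp hrange c
  exact ⟨y, fun i => (dotProduct_comm _ _).trans (congrFun hy i)⟩

theorem exists_dotProduct_eq_one {x : n → K} (hx : x ≠ 0) : ∃ y : n → K, y ⬝ᵥ x = 1 := by
  obtain ⟨y, hy⟩ := exists_forall_dotProduct_eq
    (LinearIndependent.of_subsingleton (v := fun _ : Unit => x) () hx) 1
  exact ⟨y, hy ()⟩

end Rank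

section Range

variable {K n : Type*} [Field K] [Fintype n]

theorem trace_eq_mul_rank_of_mul_self_eq_smul {A : Matrix n n K} {d : K} (hA : A * A = d • A) :
    A.trace = d * A.rank := by
  classical
  have hrestrict : A.toLin'.restrict (fun x _ => LinearMap.mem_range_self A.toLin' x) =
      d • (1 : Module.End K (LinearMap.range A.toLin')) := by
    ext ⟨_, u, rfl⟩ : 2
    simp [hA, smul_mulVec]
  have htrace := LinearMap.trace_restrict_eq_of_forall_mem (LinearMap.range A.toLin') A.toLin'
    (LinearMap.mem_range_self _)
  rw [hrestrict, map_smul, LinearMap.trace_one, trace_toLin'_eq] at htrace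
  rw [← htrace, smul_eq_mul, Matrix.rank, toLin'_apply']

theorem trace_eq_rank_of_isIdempotentElem {P : Matrix n n K} (hP : IsIdempotentElem P) :
    P.trace = P.rank := by
  rw [trace_eq_mul_rank_of_mul_self_eq_smul (d := 1) (by rw [hP.eq, one_smul]), one_mul]

theorem isIdempotentElem_of_trace_eq_rank [CharZero K] {A : Matrix n n K} {d : K}
    (hA : A * A = d • A) (htr : A.trace = A.rank) : IsIdempotentElem A := by
  rcases eq_or_ne A 0 with rfl | hA0
  · exact IsIdempotentElem.zero
  have hrank : (A.rank : K) ≠ 0 := Nat.cast_ne_zero.mpr (mt matrix_rank_eq_zero.mp hA0)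
  have hd : d = 1 := by
    rw [trace_eq_mul_rank_of_mul_self_eq_smul hA] at htr
    exact (mul_eq_right₀ hrank).mp htr
  rw [IsIdempotentElem, hA, hd, one_smul]

theorem exists_linearIndependent_mulVec_pair {A : Matrix n n K} (hA : ∀ d : K, A * A ≠ d • A) :
    ∃ u, LinearIndependent K ![A *ᵥ u, A *ᵥ (A *ᵥ u)] := by
  classical
  by_contra! hdep
  obtain ⟨d, hd⟩ := LinearMap.exists_eq_smul_id_of_forall_notLinearIndependent
    (f := A.toLin'.restrict fun x _ => LinearMap.mem_range_self A.toLin' x) (by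
      rintro ⟨_, u, rfl⟩ hind
      rw [LinearIndependent.pair_iff] at hind
      exact hdep u (LinearIndependent.pair_iff.mpr fun s t hst => hind s t (Subtype.ext hst)))
  refine hA d (toLin'.injective (LinearMap.ext fun u => ?_))
  simpa using congrArg Subtype.val (LinearMap.congr_fun hd ⟨A.toLin' u, u, rfl⟩)

end Range

section RankOne

theorem isIdempotentElem_vecMulVec {R n : Type*} [CommSemiring R] [Fintype n] {x y : n → R}
    (h : y ⬝ᵥ x = 1) : IsIdempotentElem (vecMulVec x y) := by
  rw [IsIdempotentElem, vecMulVec_mul_vecMulVec, h, one_smul]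

variable {K n : Type*} [Field K] [Fintype n]

theorem exists_rank_sub_vecMulVec_le {A : Matrix n n K} (hA : A ≠ 0) :
    ∃ x y : n → K, y ⬝ᵥ x = 1 ∧ (A - vecMulVec x y).rank ≤ A.rank := by
  classical
  obtain ⟨u, hu⟩ : ∃ u, A *ᵥ u ≠ 0 := by
    by_contra! h
    exact hA (ext_of_mulVec_single fun i => by rw [h, zero_mulVec])
  obtain ⟨y, hy⟩ := exists_dotProduct_eq_one hu
  refine ⟨A *ᵥ u, y, hy, ?_⟩
  rw [← mul_vecMulVec, ← mul_one_sub]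
  exact rank_mul_le_left _ _

theorem exists_rank_sub_vecMulVec_lt {A : Matrix n n K} (hA : ∀ d : K, A * A ≠ d • A) :
    ∃ x y : n → K, y ⬝ᵥ x = 1 ∧ (A - vecMulVec x y).rank < A.rank := by
  obtain ⟨u, hu⟩ := exists_linearIndependent_mulVec_pair hA
  obtain ⟨v, hv⟩ := exists_forall_dotProduct_eq hu 1
  refine ⟨A *ᵥ u, v ᵥ* A, ?_, rank_sub_vecMulVec_lt A (hv 0)⟩
  rw [← dotProduct_mulVec]
  exact hv 1

theorem isIdempotentElem_or_exists_rank_sub_vecMulVec_le [CharZero K] {A : Matrix n n K} {N : ℕ}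
    (htr : A.trace = (N + 1 : ℕ)) (hrank : A.rank ≤ N + 1) :
    IsIdempotentElem A ∨ ∃ x y : n → K, y ⬝ᵥ x = 1 ∧ (A - vecMulVec x y).rank ≤ N := by
  rcases hrank.lt_or_eq with hlt | heq
  · have hA : A ≠ 0 := by
      rintro rfl
      rw [trace_zero] at htr
      exact Nat.cast_ne_zero.mpr N.succ_ne_zero htr.symm
    obtain ⟨x, y, hxy, hle⟩ := exists_rank_sub_vecMulVec_le hA
    exact .inr ⟨x, y, hxy, hle.trans (Nat.le_of_lt_succ hlt)⟩
  · by_cases hA : ∃ d : K, A * A = d • A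
    · obtain ⟨d, hd⟩ := hA
      exact .inl (isIdempotentElem_of_trace_eq_rank hd (by rw [htr, heq]))
    · obtain ⟨x, y, hxy, hlt⟩ := exists_rank_sub_vecMulVec_lt (not_exists.mp hA)
      exact .inr ⟨x, y, hxy, Nat.le_of_lt_succ (hlt.trans_eq heq)⟩

end RankOne

section Sufficiency

variable {K n : Type*} [Field K] [Fintype n] [DecidableEq n] {k : ℕ}

theorem mem_potentSums_of_rank_le_trace [CharZero K] {N : ℕ} {A : Matrix n n K}
    (htr : A.trace = N) (hrank : A.rank ≤ N) : A ∈ potentSums (Matrix n n K) k := by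
  induction N generalizing A with
  | zero =>
    rw [matrix_rank_eq_zero.mp (Nat.le_zero.mp hrank)]
    exact zero_mem _
  | succ N ih =>
    rcases isIdempotentElem_or_exists_rank_sub_vecMulVec_le htr hrank with hA | ⟨x, y, hxy, hle⟩
    · exact mem_potentSums_of_isIdempotentElem hA
    · have htr' : (A - vecMulVec x y).trace = N := by
        rw [trace_sub, trace_vecMulVec, dotProduct_comm, hxy, htr, Nat.cast_succ,
          add_sub_cancel_right]
      rw [← sub_add_cancel A (vecMulVec x y)]
      exact add_mem (ih htr' hle)
        (mem_potentSums_of_isIdempotentElem (isIdempotentElem_vecMulVec hxy))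

theorem vecMulVec_mem_potentSums_of_dotProduct_eq_zero (hneg : -1 ∈ potentSums K k) {x y : n → K}
    (hxy : y ⬝ᵥ x = 0) : vecMulVec x y ∈ potentSums (Matrix n n K) k := by
  rcases eq_or_ne x 0 with rfl | hx
  · rw [zero_vecMulVec]
    exact zero_mem _
  obtain ⟨z, hz⟩ := exists_dotProduct_eq_one hx
  have hzy : (z + y) ⬝ᵥ x = 1 := by rw [add_dotProduct, hz, hxy, add_zero]
  have hsplit : vecMulVec x y = vecMulVec x (z + y) + (-1 : K) • vecMulVec x z := by
    rw [vecMulVec_add, neg_one_smul]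
    abel
  rw [hsplit]
  exact add_mem (mem_potentSums_of_isIdempotentElem (isIdempotentElem_vecMulVec hzy))
    (smul_mem_potentSums hneg (isIdempotentElem_vecMulVec hz))

theorem vecMulVec_sub_smul_mem_potentSums (hneg : -1 ∈ potentSums K k) {p q : n → K}
    (hpq : q ⬝ᵥ p = 1) (x y : n → K) :
    vecMulVec x y - (y ⬝ᵥ x) • vecMulVec p q ∈ potentSums (Matrix n n K) k := by
  set α := q ⬝ᵥ x with hα
  set β := y ⬝ᵥ p with hβ
  set s := y ⬝ᵥ x - α * β with hs
  -- All three summands have square zero: `q` is orthogonal to `x - α • p`, `p` to `y - β • q`,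
  -- and these two vectors pair to `s`.
  have hsplit : vecMulVec x y - (y ⬝ᵥ x) • vecMulVec p q =
      vecMulVec (x - α • p + p) (y - β • q - s • q) +
        vecMulVec (x - α • p) ((β + s) • q) + vecMulVec p ((α - 1) • (y - β • q)) := by
    simp only [hs, vecMulVec_sub, vecMulVec_smul, add_vecMulVec, sub_vecMulVec, smul_vecMulVec]
    module
  rw [hsplit]
  refine add_mem (add_mem ?_ ?_) ?_ <;>
    refine vecMulVec_mem_potentSums_of_dotProduct_eq_zero hneg ?_ <;>
    simp only [sub_dotProduct, smul_dotProduct, dotProduct_add, dotProduct_sub, dotProduct_smul,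
      smul_eq_mul, hpq, ← hα, ← hβ, hs] <;>
    ring

theorem sum_vecMulVec_single_row {R : Type*} [NonAssocSemiring R] (A : Matrix n n R) :
    ∑ i, vecMulVec (Pi.single i 1) (A.row i) = A := by
  ext a b
  simp [Matrix.sum_apply, vecMulVec_apply, Pi.single_apply]

theorem sub_trace_smul_mem_potentSums (hneg : -1 ∈ potentSums K k) {p q : n → K}
    (hpq : q ⬝ᵥ p = 1) (A : Matrix n n K) :
    A - A.trace • vecMulVec p q ∈ potentSums (Matrix n n K) k := by
  have hsum : A - A.trace • vecMulVec p q = ∑ i, (vecMulVec (Pi.single i 1) (A.row i) -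
      (A.row i ⬝ᵥ Pi.single i 1) • vecMulVec p q) := by
    rw [Finset.sum_sub_distrib, sum_vecMulVec_single_row, ← Finset.sum_smul]
    simp [Matrix.trace]
  rw [hsum]
  exact sum_mem fun i _ => vecMulVec_sub_smul_mem_potentSums hneg hpq _ _

theorem mem_potentSums_of_trace_mem (hneg : -1 ∈ potentSums K k) {A : Matrix n n K}
    (htr : A.trace ∈ potentSums K k) : A ∈ potentSums (Matrix n n K) k := by
  rcases isEmpty_or_nonempty n with hn | ⟨⟨i⟩⟩
  · rw [Subsingleton.elim A 0]
    exact zero_mem _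
  have hi : Pi.single i (1 : K) ⬝ᵥ Pi.single i 1 = 1 := by simp
  rw [← sub_add_cancel A (A.trace • vecMulVec (Pi.single i 1) (Pi.single i 1))]
  exact add_mem (sub_trace_smul_mem_potentSums hneg hi A)
    (smul_mem_potentSums htr (isIdempotentElem_vecMulVec hi))

end Sufficiency

section Necessity

variable {K n : Type*} [Field K] [Fintype n] [DecidableEq n] {k : ℕ} {ω : K}

theorem exists_polynomial_of_pow_succ_eq (hω : IsPrimitiveRoot ω k) (hk : k ≠ 0)
    {E : Matrix n n K} (hE : E ^ (k + 1) = E) :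
    ∃ F : ℕ[X], F.natDegree ≤ k - 1 ∧ E.trace = aeval ω F ∧ E.rank ≤ F.eval 1 := by
  obtain ⟨P, hP, rfl⟩ := exists_isIdempotentElem_sum_smul_eq hω hk hE
  refine ⟨∑ j ∈ Finset.range k, C (P j).rank * X ^ j, ?_, ?_, ?_⟩
  · refine natDegree_sum_le_of_forall_le _ _ fun j hj => ?_
    exact (natDegree_C_mul_X_pow_le _ _).trans (Nat.le_pred_of_lt (Finset.mem_range.mp hj))
  · simp [trace_sum, trace_eq_rank_of_isIdempotentElem (hP _), mul_comm]
  · calc (∑ j ∈ Finset.range k, ω ^ j • P j).rank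
        ≤ ∑ j ∈ Finset.range k, (ω ^ j • P j).rank := matrix_rank_sum_le _ _
      _ = ∑ j ∈ Finset.range k, (P j).rank := Finset.sum_congr rfl fun j _ =>
          rank_smul_of_mem_nonZeroDivisors _
            (mem_nonZeroDivisors_of_ne_zero (pow_ne_zero j (hω.ne_zero hk)))
      _ = eval 1 (∑ j ∈ Finset.range k, C (P j).rank * X ^ j) := by simp [eval_finsetSum]

theorem exists_polynomial_of_mem_potentSums (hω : IsPrimitiveRoot ω k) (hk : k ≠ 0)
    {A : Matrix n n K} (hA : A ∈ potentSums (Matrix n n K) k) :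
    ∃ F : ℕ[X], F.natDegree ≤ k - 1 ∧ A.trace = aeval ω F ∧ A.rank ≤ F.eval 1 := by
  induction hA using AddSubmonoid.closure_induction with
  | mem E hE => exact exists_polynomial_of_pow_succ_eq hω hk hE
  | zero => exact ⟨0, by simp⟩
  | add A B _ _ hA hB =>
    obtain ⟨F, hF, hFtr, hFrank⟩ := hA
    obtain ⟨G, hG, hGtr, hGrank⟩ := hB
    refine ⟨F + G, natDegree_add_le_of_degree_le hF hG, ?_, ?_⟩
    · rw [trace_add, map_add, hFtr, hGtr]
    · rw [eval_add]
      exact (matrix_rank_add_le A B).trans (add_le_add hFrank hGrank)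

end Necessity

theorem sum_of_kpotent_iff_general {K n : Type*} [Field K] [Fintype n] [DecidableEq n] {k : ℕ}
    (hk : k ≠ 0) {ω : K} (hω : IsPrimitiveRoot ω k) (A : Matrix n n K) :
    (∃ (m : ℕ) (E : Fin m → Matrix n n K), (∀ i, E i ^ (k + 1) = E i) ∧ A = ∑ i, E i) ↔
      ∃ F : ℕ[X], F.natDegree ≤ k - 1 ∧ A.trace = aeval ω F ∧ A.rank ≤ F.eval 1 := by
  rw [← mem_potentSums_iff]
  refine ⟨exists_polynomial_of_mem_potentSums hω hk, ?_⟩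
  rintro ⟨F, -, htr, hrank⟩
  by_cases hneg : -1 ∈ potentSums K k
  · exact mem_potentSums_of_trace_mem hneg (htr ▸ aeval_mem_potentSums hω.pow_eq_one F)
  obtain rfl : k = 1 := by
    by_contra hk1
    exact hneg (neg_one_mem_potentSums_of_isPrimitiveRoot hω (by lia))
  obtain hK | ⟨p, hp, hK⟩ := CharP.exists' K
  · rw [IsPrimitiveRoot.one_right_iff.mp hω] at htr
    refine mem_potentSums_of_rank_le_trace (htr.trans ?_) hrank
    simpa using aeval_algebraMap_apply K (1 : ℕ) F
  · exact absurd (neg_one_mem_potentSums_of_charP K p 1) hneg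

theorem sum_of_kpotent_iff (k n : ℕ) (hk : 1 ≤ k)
    (ω : ℂ) (hω : ω = Complex.exp (2 * Real.pi * Complex.I / k))
    (A : Matrix (Fin n) (Fin n) ℂ) :
    (∃ (m : ℕ) (E : Fin m → Matrix (Fin n) (Fin n) ℂ),
        (∀ i, E i ^ (k + 1) = E i) ∧ A = ∑ i, E i) ↔
    (∃ F : Polynomial ℕ, F.natDegree ≤ k - 1 ∧
        A.trace = Polynomial.aeval ω F ∧ A.rank ≤ F.eval 1) :=
  sum_of_kpotent_iff_general (by lia) (hω ▸ Complex.isPrimitiveRoot_exp k (by lia)) A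
end

section
/- Let F be a field of characteristic different from 2, let k ≥ 2 be an integer, let ω ∈ F satisfy ω^k = 1 and ω ≠ 1, and let A be an n×n matrix over F. Then the 2n×2n block-diagonal matrix (ωI + A) ⊕ (ωI − A) is a sum of two (k+1)-potent matrices over F. -/
open Matrix

/-!
Let `W` commute with `A` and satisfy `W ^ k = 1`. Since `2` is invertible we may write
`W + A = 2 W b` with `b` commuting with `W`, so that `W - A = 2 W (1 - b)`. The matrices with
diagonal blocks `b, 1 - b` and off-diagonal blocks `± b (1 - b), ± 1` are both idempotent, and their
off-diagonal blocks cancel in the sum. Multiplying each of them by `W ⊕ W`, which commutes with them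
and has `k`-th power `1`, turns them into `(k + 1)`-potent matrices.
-/

theorem mul_pow_succ_eq_self_of_isIdempotentElem {M : Type*} [Monoid M] {w p : M} {k : ℕ}
    (hw : w ^ k = 1) (hp : IsIdempotentElem p) (hwp : Commute w p) :
    (w * p) ^ (k + 1) = w * p := by
  rw [hwp.mul_pow, hp.pow_succ_eq, pow_succ, hw, one_mul]

theorem exists_commute_mul_two_mul_eq_add {R : Type*} [Semiring R] (h2 : IsUnit (2 : R)) {w a : R}
    (hw : IsUnit w) (hwa : Commute w a) :
    ∃ b, Commute w b ∧ w * (2 * b) = w + a := by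
  obtain ⟨t, ht⟩ := h2
  obtain ⟨u, rfl⟩ := hw
  have hut : Commute (u : R) t := ht ▸ Commute.ofNat_right (u : R) 2
  have hadd : Commute (u : R) (u + a) := (Commute.refl (u : R)).add_right hwa
  refine ⟨↑t⁻¹ * (↑u⁻¹ * (u + a)),
    hut.units_inv_right.mul_right ((Commute.refl (u : R)).units_inv_right.mul_right hadd), ?_⟩
  rw [← ht, t.mul_inv_cancel_left, u.mul_inv_cancel_left]

theorem commute_fromBlocks_diagonal {m n R : Type*} [Fintype m] [Fintype n]
    [NonUnitalNonAssocSemiring R] {v : Matrix m m R} {w : Matrix n n R} {a : Matrix m m R}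
    {b : Matrix m n R} {c : Matrix n m R} {d : Matrix n n R} (ha : Commute v a)
    (hb : v * b = b * w) (hc : w * c = c * v) (hd : Commute w d) :
    Commute (fromBlocks v 0 0 w) (fromBlocks a b c d) := by
  simp only [commute_iff_eq, fromBlocks_multiply, Matrix.zero_mul, Matrix.mul_zero, add_zero,
    zero_add, ha.eq, hb, hc, hd.eq]

section

variable {m R : Type*} [Fintype m] [DecidableEq m] [Ring R]

theorem isIdempotentElem_fromBlocks_one_sub {b x y : Matrix m m R} (hx : Commute b x)
    (hy : Commute b y) (hxy : x * y = b * (1 - b)) (hyx : y * x = b * (1 - b)) :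
    IsIdempotentElem (fromBlocks b x y (1 - b)) := by
  rw [IsIdempotentElem, fromBlocks_multiply, hxy, hyx, hx.eq, ← hy.eq]
  congr 1 <;> noncomm_ring

theorem exists_isIdempotentElem_add_eq_fromBlocks {w b : Matrix m m R} (hwb : Commute w b) :
    ∃ P Q : Matrix (m ⊕ m) (m ⊕ m) R,
      IsIdempotentElem P ∧ IsIdempotentElem Q ∧
      Commute (fromBlocks w 0 0 w) P ∧ Commute (fromBlocks w 0 0 w) Q ∧
      P + Q = fromBlocks (2 * b) 0 0 (2 * (1 - b)) := by
  have hw : Commute w (1 - b) := (Commute.one_right w).sub_right hwb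
  have hwx : Commute w (b * (1 - b)) := hwb.mul_right hw
  have hb : Commute b (1 - b) := (Commute.one_right b).sub_right (Commute.refl b)
  have hbx : Commute b (b * (1 - b)) := (Commute.refl b).mul_right hb
  refine ⟨fromBlocks b (b * (1 - b)) 1 (1 - b), fromBlocks b (-(b * (1 - b))) (-1) (1 - b),
    isIdempotentElem_fromBlocks_one_sub hbx (.one_right b) (mul_one _) (one_mul _),
    isIdempotentElem_fromBlocks_one_sub hbx.neg_right (Commute.one_right b).neg_right
      (by rw [neg_mul_neg, mul_one]) (by rw [neg_mul_neg, one_mul]),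
    commute_fromBlocks_diagonal hwb hwx (Commute.one_right w) hw,
    commute_fromBlocks_diagonal hwb hwx.neg_right (Commute.one_right w).neg_right hw, ?_⟩
  simp only [fromBlocks_add, add_neg_cancel, two_mul]

theorem block_diag_sum_two_kpotent_general (h2 : IsUnit (2 : R)) {k : ℕ} {W A : Matrix m m R}
    (hW : W ^ k = 1) (hWA : Commute W A) :
    ∃ B C : Matrix (m ⊕ m) (m ⊕ m) R,
      B ^ (k + 1) = B ∧ C ^ (k + 1) = C ∧ fromBlocks (W + A) 0 0 (W - A) = B + C := by
  obtain rfl | hk := eq_or_ne k 0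
  · exact ⟨_, 0, pow_one _, pow_one _, (add_zero _).symm⟩
  have h2' : IsUnit (2 : Matrix m m R) := by simpa only [map_ofNat] using h2.map (scalar m)
  obtain ⟨b, hWb, hadd⟩ := exists_commute_mul_two_mul_eq_add h2' (.of_pow_eq_one hW hk) hWA
  have hsub : W * (2 * (1 - b)) = W - A := by
    rw [mul_sub, mul_sub, hadd]
    noncomm_ring
  obtain ⟨P, Q, hP, hQ, hDP, hDQ, hPQ⟩ := exists_isIdempotentElem_add_eq_fromBlocks hWb
  have hD : fromBlocks W 0 0 W ^ k = 1 := by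
    rw [fromBlocks_diagonal_pow, hW, fromBlocks_one]
  refine ⟨fromBlocks W 0 0 W * P, fromBlocks W 0 0 W * Q,
    mul_pow_succ_eq_self_of_isIdempotentElem hD hP hDP,
    mul_pow_succ_eq_self_of_isIdempotentElem hD hQ hDQ, ?_⟩
  rw [← mul_add, hPQ, fromBlocks_multiply, ← hadd, ← hsub]
  simp only [Matrix.mul_zero, Matrix.zero_mul, add_zero, zero_add]

end

theorem block_diag_sum_two_kpotent {F : Type*} [Field F] (hchar : (2 : F) ≠ 0)
    (k n : ℕ) (hk : 2 ≤ k) (ω : F) (hω : ω ^ k = 1) (hω1 : ω ≠ 1)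
    (A : Matrix (Fin n) (Fin n) F) :
    ∃ B C : Matrix (Fin n ⊕ Fin n) (Fin n ⊕ Fin n) F,
      B ^ (k + 1) = B ∧ C ^ (k + 1) = C ∧
      Matrix.fromBlocks (ω • (1 : Matrix (Fin n) (Fin n) F) + A) 0 0
        (ω • (1 : Matrix (Fin n) (Fin n) F) - A) = B + C :=
  block_diag_sum_two_kpotent_general hchar.isUnit (by rw [smul_pow, hω, one_pow, one_smul])
    ((Commute.one_left A).smul_left ω)
end

section
/- Let k ≥ 2 be an integer, let ω = exp(2πi/k) ∈ ℂ, and let A be a complex n×n matrix with n ≥ k such that tr(A) = α_0 + α_1·ω + α_2·ω² + … + α_{k−1}·ω^{k−1}, where each α_i is an integer with α_i > 3, and rank(A) = k. Then A is a sum of (γ_0 + γ_1 + … + γ_{k−1} + 2)·k many (k+1)-potent matrices, where γ_i = (α_i − 2)/2 if α_i is even and γ_i = (α_i − 3)/2 + 3 if α_i is odd. -/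
open Matrix

/-!
A matrix `E` of rank at most one satisfies `E ^ (k + 1) = (tr E) ^ k • E`, so it is
`(k+1)`-potent as soon as its trace is a `k`-th root of unity. It therefore suffices to write `A` as
a sum of matrices of rank at most one whose traces are the roots of unity prescribed by `tr A`.
These are split off one at a time: by Wedderburn's rank reduction a summand of trace `t` can be
chosen to lower the rank, unless `A * A = c • A` with `c ≠ t`. As long as the rank is at least two,
any summand of trace `t` whose columns lie in the range of `A` then leaves a matrix that is not of
this exceptional form, so two summands always suffice to lower the rank by one. In rank one only the
total of the traces matters. This uses one summand per root of unity in `tr A`; zero matrices, which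
are also `(k+1)`-potent, make up the required number.
-/

section RankOne

variable {K m n : Type*} [Field K] [Fintype n]

theorem eq_zero_of_rank_eq_zero {A : Matrix m n K} (hA : A.rank = 0) : A = 0 := by
  classical
  have hlin : A.mulVecLin = 0 := LinearMap.range_eq_bot.mp (Submodule.finrank_eq_zero.mp hA)
  exact ext_of_mulVec_single fun j => by
    rw [← mulVecLin_apply, hlin, LinearMap.zero_apply, zero_mulVec]

theorem exists_eq_vecMulVec_of_rank_le_one {A : Matrix m n K} (hA : A.rank ≤ 1) :
    ∃ (u : m → K) (v : n → K), A = vecMulVec u v := by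
  classical
  obtain ⟨u, hu⟩ := finrank_le_one_iff.mp hA
  choose v hv using fun j => hu ⟨A *ᵥ Pi.single j 1, LinearMap.mem_range_self A.mulVecLin _⟩
  refine ⟨u, v, Matrix.ext fun i j => ?_⟩
  have hcol : v j * (u : m → K) i = A i j := by
    simpa using congrFun (congrArg Subtype.val (hv j)) i
  rw [vecMulVec_apply, ← hcol, mul_comm]

theorem mul_mul_self_of_rank_le_one [Fintype m] {Q : Matrix m n K} (hQ : Q.rank ≤ 1)
    (A : Matrix n m K) : Q * A * Q = (A * Q).trace • Q := by
  obtain ⟨u, v, rfl⟩ := exists_eq_vecMulVec_of_rank_le_one hQ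
  rw [vecMulVec_mul, vecMulVec_mul_vecMulVec, vecMulVec_smul, mul_vecMulVec, trace_vecMulVec,
    ← dotProduct_mulVec, dotProduct_comm]

theorem mul_self_of_rank_le_one {A : Matrix n n K} (hA : A.rank ≤ 1) :
    A * A = A.trace • A := by
  classical
  simpa only [mul_one, one_mul] using mul_mul_self_of_rank_le_one hA 1

theorem pow_succ_of_rank_le_one [DecidableEq n] {A : Matrix n n K} (hA : A.rank ≤ 1) (k : ℕ) :
    A ^ (k + 1) = A.trace ^ k • A := by
  induction k with
  | zero => rw [zero_add, pow_one, pow_zero, one_smul]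
  | succ k ih =>
    rw [pow_succ, ih, smul_mul_assoc, mul_self_of_rank_le_one hA, smul_smul, ← pow_succ]

end RankOne

section RankReduction

variable {K m n : Type*} [Field K] [Fintype n]

-- The range shrinks: `Q` annihilates the range of `A - A * Q * A` but not that of `A`.
theorem rank_sub_mul_mul_lt [Fintype m] {A : Matrix m n K} {Q : Matrix n m K}
    (hQ : Q * A * Q = Q) (hQ0 : Q ≠ 0) : (A - A * Q * A).rank < A.rank := by
  classical
  refine Submodule.finrank_lt_finrank_of_lt (lt_of_le_of_ne ?_ fun heq => hQ0 ?_)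
  · rintro _ ⟨x, rfl⟩
    exact ⟨x - Q *ᵥ A *ᵥ x, by simp [mulVec_sub, Matrix.mul_assoc]⟩
  · refine ext_of_mulVec_single fun i => ?_
    obtain ⟨x, hx⟩ : A *ᵥ Q *ᵥ Pi.single i 1 ∈ LinearMap.range (A - A * Q * A).mulVecLin :=
      heq ▸ ⟨_, rfl⟩
    have hQA : Q * (A - A * Q * A) = 0 := by
      rw [Matrix.mul_sub, ← Matrix.mul_assoc, ← Matrix.mul_assoc, hQ, sub_self]
    calc Q *ᵥ Pi.single i 1
      _ = Q *ᵥ A *ᵥ Q *ᵥ Pi.single i 1 := by rw [mulVec_mulVec, mulVec_mulVec, hQ]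
      _ = (Q * (A - A * Q * A)) *ᵥ x := by rw [← hx, mulVecLin_apply, mulVec_mulVec]
      _ = 0 *ᵥ Pi.single i 1 := by rw [hQA, zero_mulVec, zero_mulVec]

theorem exists_dotProduct_eq_zero_and_ne_zero_of_notMem_span {b w : n → K}
    (hw : w ∉ Submodule.span K {b}) : ∃ y : n → K, y ⬝ᵥ b = 0 ∧ y ⬝ᵥ w ≠ 0 := by
  classical
  obtain ⟨f, hfw, hfb⟩ := Submodule.exists_le_ker_of_notMem hw
  obtain ⟨y, rfl⟩ := (dotProductEquiv K n).surjective f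
  exact ⟨y, hfb (Submodule.mem_span_singleton_self b), hfw⟩

theorem exists_mul_self_eq_smul_of_forall_mem_span {A : Matrix n n K}
    (h : ∀ x, A *ᵥ A *ᵥ x ∈ Submodule.span K {A *ᵥ x}) : ∃ c : K, A * A = c • A := by
  classical
  let f : Module.End K (LinearMap.range A.mulVecLin) :=
    A.mulVecLin.restrict fun x _ => ⟨x, rfl⟩
  obtain ⟨c, hc⟩ : ∃ c : K, f = c • 1 := by
    refine LinearMap.exists_eq_smul_id_of_forall_notLinearIndependent fun ⟨_, x, rfl⟩ hli => ?_
    obtain ⟨c, hc⟩ := Submodule.mem_span_singleton.mp (h x)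
    have hrel := LinearIndependent.pair_iff.mp hli c (-1) (Subtype.ext ?_)
    · exact neg_ne_zero.mpr one_ne_zero hrel.2
    · change c • A *ᵥ x + (-1 : K) • A *ᵥ A *ᵥ x = 0
      rw [hc, neg_one_smul, add_neg_cancel]
  refine ⟨c, ext_of_mulVec_single fun i => ?_⟩
  rw [← mulVec_mulVec, smul_mulVec]
  exact congrArg Subtype.val (LinearMap.congr_fun hc ⟨A *ᵥ Pi.single i 1, _, rfl⟩)

theorem exists_dotProduct_mulVec_mulVec_eq {A : Matrix n n K} {t : K} (hA : A ≠ 0)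
    (h : ∀ c : K, A * A = c • A → c = t) :
    ∃ x y : n → K, y ⬝ᵥ A *ᵥ A *ᵥ x = t * (y ⬝ᵥ A *ᵥ x) ∧ y ⬝ᵥ A *ᵥ x ≠ 0 := by
  classical
  by_contra! hxy
  have hspan (x : n → K) : ∃ s : K, s • (A *ᵥ A *ᵥ x - t • A *ᵥ x) = A *ᵥ x := by
    rw [← Submodule.mem_span_singleton]
    by_contra hx
    obtain ⟨y, hy, hne⟩ := exists_dotProduct_eq_zero_and_ne_zero_of_notMem_span hx
    rw [dotProduct_sub, dotProduct_smul, sub_eq_zero, smul_eq_mul] at hy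
    exact hne (hxy x y hy)
  obtain ⟨c, hc⟩ : ∃ c : K, A * A = c • A := by
    refine exists_mul_self_eq_smul_of_forall_mem_span fun x => ?_
    obtain ⟨s, hs⟩ := hspan x
    rcases eq_or_ne s 0 with rfl | hs0
    · rw [← hs, zero_smul, mulVec_zero]
      exact zero_mem _
    · refine Submodule.mem_span_singleton.mpr ⟨s⁻¹ + t, ?_⟩
      rw [add_smul, ← eq_sub_iff_add_eq, inv_smul_eq_iff₀ hs0, hs]
  refine hA (ext_of_mulVec_single fun i => ?_)
  obtain ⟨s, hs⟩ := hspan (Pi.single i 1)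
  rw [← hs, mulVec_mulVec, hc, h c hc, smul_mulVec, sub_self, smul_zero, zero_mulVec]

theorem exists_rank_le_one_trace_eq_rank_sub_lt {A : Matrix n n K} {t : K} (hA : A ≠ 0)
    (h : ∀ c : K, A * A = c • A → c = t) :
    ∃ R : Matrix n n K, R.rank ≤ 1 ∧ R.trace = t ∧ (A - R).rank < A.rank := by
  obtain ⟨x, y, hxy, hne⟩ := exists_dotProduct_mulVec_mulVec_eq hA h
  set s := y ⬝ᵥ A *ᵥ x with hs
  set Q := vecMulVec (s⁻¹ • x) y with hQ_def
  have hQ_rank : Q.rank ≤ 1 := rank_vecMulVec_le _ _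
  have hAQ : (A * Q).trace = 1 := by
    rw [hQ_def, mul_vecMulVec, trace_vecMulVec, mulVec_smul, smul_dotProduct, dotProduct_comm, ← hs,
      smul_eq_mul, inv_mul_cancel₀ hne]
  have hQ : Q * A * Q = Q := by rw [mul_mul_self_of_rank_le_one hQ_rank, hAQ, one_smul]
  have hQ0 : Q ≠ 0 := by
    intro h0
    simp [h0] at hAQ
  refine ⟨A * Q * A, ?_, ?_, rank_sub_mul_mul_lt hQ hQ0⟩
  · exact (rank_mul_le_left _ _).trans ((rank_mul_le_right _ _).trans hQ_rank)
  · rw [trace_mul_comm, hQ_def, mul_vecMulVec, mul_vecMulVec, trace_vecMulVec, mulVec_smul,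
      mulVec_smul, smul_dotProduct, dotProduct_comm, hxy, smul_eq_mul, mul_comm t,
      inv_mul_cancel_left₀ hne]

-- Multiplying by `R` forces `d = c - tr R`, and then `R * A = (tr R) • A` has rank at most one.
theorem sub_mul_sub_ne_smul {A R : Matrix n n K} {c : K} (hA : 1 < A.rank) (hAA : A * A = c • A)
    (hAR : A * R = c • R) (hR : R.rank ≤ 1) (ht : R.trace ≠ 0) (hct : c ≠ R.trace) (d : K) :
    (A - R) * (A - R) ≠ d • (A - R) := by
  intro h
  have hR0 : R ≠ 0 := by
    rintro rfl
    exact ht (trace_zero n K)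
  have hBR : (A - R) * R = (c - R.trace) • R := by
    rw [sub_mul, hAR, mul_self_of_rank_le_one hR, sub_smul]
  have hBBR : ((c - R.trace) * (c - R.trace)) • R = (d * (c - R.trace)) • R :=
    calc ((c - R.trace) * (c - R.trace)) • R = (A - R) * (A - R) * R := by
          rw [mul_assoc, hBR, mul_smul_comm, hBR, smul_smul]
      _ = (d * (c - R.trace)) • R := by rw [h, smul_mul_assoc, hBR, smul_smul]
  have hd : c - R.trace = d :=
    mul_right_cancel₀ (sub_ne_zero.mpr hct) (smul_left_injective K hR0 hBBR)
  have hRA : R * A = R.trace • A := by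
    rw [← hd, mul_sub, hBR, sub_mul, hAA] at h
    linear_combination (norm := module) -h
  have hA_eq : A = R * (R.trace⁻¹ • A) := by rw [mul_smul_comm, hRA, inv_smul_smul₀ ht]
  have hA_le : A.rank ≤ 1 := hA_eq ▸ (rank_mul_le_left _ _).trans hR
  exact hA_le.not_gt hA

theorem exists_rank_le_one_trace_eq_forall_sub_mul_sub_ne_smul {A : Matrix n n K} {c t : K}
    (hA : 1 < A.rank) (hAA : A * A = c • A) (ht : t ≠ 0) (hct : c ≠ t) :
    ∃ R : Matrix n n K, R.rank ≤ 1 ∧ R.trace = t ∧ (A - R).rank ≤ A.rank ∧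
      ∀ d : K, (A - R) * (A - R) ≠ d • (A - R) := by
  classical
  obtain ⟨i, j, hij⟩ : ∃ i j, A i j ≠ 0 := by
    by_contra! h
    have hA0 : A = 0 := Matrix.ext h
    simp [hA0] at hA
  let Q : Matrix n n K := vecMulVec (Pi.single j (t / A i j)) (Pi.single i 1)
  have hR : (A * Q).rank ≤ 1 := (rank_mul_le_right A Q).trans (rank_vecMulVec_le _ _)
  have htr : (A * Q).trace = t := by
    rw [mul_vecMulVec, trace_vecMulVec, mulVec_single, dotProduct_single_one, Pi.smul_apply,
      col_apply, op_smul_eq_smul, smul_eq_mul, div_mul_cancel₀ _ hij]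
  have hAR : A * (A * Q) = c • (A * Q) := by rw [← mul_assoc, hAA, smul_mul_assoc]
  refine ⟨A * Q, hR, htr, ?_, ?_⟩
  · have hfactor : A - A * Q = A * (1 - Q) := by rw [mul_sub, mul_one]
    rw [hfactor]
    exact rank_mul_le_left _ _
  · exact sub_mul_sub_ne_smul hA hAA hAR hR (htr ▸ ht) (htr ▸ hct)

end RankReduction

section Decomposition

variable {K n σ : Type*} [Field K] [Fintype n]

/-- `A` is a sum over `s ∈ S` of matrices of rank at most one with prescribed traces `t s`; when the
`t s` are `k`-th roots of unity, the summands are `(k+1)`-potent. They form a function on all of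
`σ`, with arbitrary values outside `S`, so that splitting one off only erases its index from `S`. -/
def HasRankOneDecomposition (A : Matrix n n K) (S : Finset σ) (t : σ → K) : Prop :=
  ∃ E : σ → Matrix n n K, (∀ s ∈ S, (E s).rank ≤ 1 ∧ (E s).trace = t s) ∧ A = ∑ s ∈ S, E s

variable {A : Matrix n n K} {S : Finset σ} {t : σ → K}

theorem HasRankOneDecomposition.of_sub [DecidableEq σ] {R : Matrix n n K} {a : σ} (ha : a ∈ S)
    (hR : R.rank ≤ 1) (htr : R.trace = t a)
    (h : HasRankOneDecomposition (A - R) (S.erase a) t) : HasRankOneDecomposition A S t := by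
  obtain ⟨E, hE, hsum⟩ := h
  have hupdate {s : σ} (hs : s ∈ S.erase a) : Function.update E a R s = E s :=
    Function.update_of_ne (Finset.ne_of_mem_erase hs) R E
  refine ⟨Function.update E a R, fun s hs => ?_, ?_⟩
  · rcases eq_or_ne s a with rfl | hsa
    · rw [Function.update_self]
      exact ⟨hR, htr⟩
    · have hs' := Finset.mem_erase.mpr ⟨hsa, hs⟩
      rw [hupdate hs']
      exact hE s hs'
  · rw [← Finset.add_sum_erase S _ ha, Function.update_self,
      Finset.sum_congr rfl fun s hs => hupdate hs, ← hsum, add_sub_cancel]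

-- Writing `A = u vᵀ` and choosing `p` with `p ⬝ᵥ v = 1`, split `u` into the multiples `t s • p`;
-- the difference between `u` and their sum is orthogonal to `v`, so one summand can absorb it.
theorem hasRankOneDecomposition_of_rank_le_one [Nonempty n] (hA : A.rank ≤ 1) (hS : S.Nonempty)
    (htr : A.trace = ∑ s ∈ S, t s) : HasRankOneDecomposition A S t := by
  classical
  obtain ⟨u, v, hv, rfl⟩ : ∃ u v : n → K, v ≠ 0 ∧ A = vecMulVec u v := by
    obtain ⟨u, v, rfl⟩ := exists_eq_vecMulVec_of_rank_le_one hA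
    rcases eq_or_ne v 0 with rfl | hv
    · exact ⟨0, 1, one_ne_zero, by rw [vecMulVec_zero, zero_vecMulVec]⟩
    · exact ⟨u, v, hv, rfl⟩
  rw [trace_vecMulVec] at htr
  obtain ⟨a, ha⟩ := hS
  obtain ⟨i, hi⟩ := Function.ne_iff.mp hv
  let p : n → K := Pi.single i (v i)⁻¹
  have hp : p ⬝ᵥ v = 1 := by rw [single_dotProduct, inv_mul_cancel₀ hi]
  let δ : σ → n → K := Pi.single a (u - (u ⬝ᵥ v) • p)
  have hδ (s : σ) : δ s ⬝ᵥ v = 0 := by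
    rcases eq_or_ne s a with rfl | hsa
    · simp [δ, hp]
    · simp [δ, hsa]
  refine ⟨fun s => vecMulVec (t s • p + δ s) v, fun s _ => ⟨rank_vecMulVec_le _ _, ?_⟩, ?_⟩
  · rw [trace_vecMulVec, add_dotProduct, smul_dotProduct, hp, hδ, smul_eq_mul, mul_one, add_zero]
  · have hu : u = ∑ s ∈ S, (t s • p + δ s) := by
      rw [Finset.sum_add_distrib, ← Finset.sum_smul, ← htr, Finset.sum_pi_single', if_pos ha,
        add_sub_cancel]
    ext i j
    simp only [Matrix.sum_apply, vecMulVec_apply, ← Finset.sum_mul]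
    rw [← Finset.sum_apply, ← hu]

theorem hasRankOneDecomposition_of_trace_eq_sum [Nonempty n] (ht : ∀ s ∈ S, t s ≠ 0)
    (hA : 2 * A.rank ≤ S.card + 1) (htr : A.trace = ∑ s ∈ S, t s) :
    HasRankOneDecomposition A S t := by
  classical
  induction S using Finset.strongInduction generalizing A with
  | H S ih =>
  rcases S.eq_empty_or_nonempty with rfl | hS
  · have hA0 : A = 0 := eq_zero_of_rank_eq_zero (by simp only [Finset.card_empty] at hA; lia)
    exact ⟨0, by simp, by simp [hA0]⟩
  by_cases hrank : A.rank ≤ 1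
  · exact hasRankOneDecomposition_of_rank_le_one hrank hS htr
  rw [not_le] at hrank
  have trace_sub_eq {B R : Matrix n n K} {U : Finset σ} {a : σ} (ha : a ∈ U) (hR : R.trace = t a)
      (hB : B.trace = ∑ s ∈ U, t s) : (B - R).trace = ∑ s ∈ U.erase a, t s := by
    rw [trace_sub, hB, hR, Finset.sum_erase_eq_sub ha]
  obtain ⟨a, ha⟩ := hS
  have hcard_a := Finset.card_erase_add_one ha
  by_cases hscalar : ∀ c : K, A * A = c • A → c = t a
  · have hA0 : A ≠ 0 := by
      rintro rfl
      simp at hrank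
    obtain ⟨R, hR, hRtr, hlt⟩ := exists_rank_le_one_trace_eq_rank_sub_lt hA0 hscalar
    exact .of_sub ha hR hRtr <| ih _ (Finset.erase_ssubset ha)
      (fun s hs => ht s (Finset.mem_of_mem_erase hs)) (by lia) (trace_sub_eq ha hRtr htr)
  · push Not at hscalar
    obtain ⟨c, hAA, hct⟩ := hscalar
    obtain ⟨R, hR, hRtr, hle, hne⟩ :=
      exists_rank_le_one_trace_eq_forall_sub_mul_sub_ne_smul hrank hAA (ht a ha) hct
    obtain ⟨b, hb⟩ : (S.erase a).Nonempty := Finset.card_pos.mp (by lia)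
    have hcard_b := Finset.card_erase_add_one hb
    have hAR0 : A - R ≠ 0 := fun h => hne 0 (by simp [h])
    obtain ⟨R', hR', hRtr', hlt⟩ := exists_rank_le_one_trace_eq_rank_sub_lt (t := t b) hAR0
      fun d hd => (hne d hd).elim
    exact .of_sub ha hR hRtr <| .of_sub hb hR' hRtr' <|
      ih _ ((Finset.erase_subset b _).trans_ssubset (Finset.erase_ssubset ha))
        (fun s hs => ht s (Finset.mem_of_mem_erase (Finset.mem_of_mem_erase hs))) (by lia)
        (trace_sub_eq hb hRtr' (trace_sub_eq ha hRtr htr))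

end Decomposition

section PotentSum

theorem exists_fin_sum_eq_of_card_le {M σ : Type*} [AddCommMonoid M] [Fintype σ] {p : M → Prop}
    (hp : p 0) {f : σ → M} (hf : ∀ s, p (f s)) {N : ℕ} (hN : Fintype.card σ ≤ N) :
    ∃ g : Fin N → M, (∀ i, p (g i)) ∧ ∑ s, f s = ∑ i, g i := by
  obtain ⟨e⟩ : Nonempty (σ ↪ Fin N) :=
    Function.Embedding.nonempty_of_card_le (by rwa [Fintype.card_fin])
  refine ⟨Function.extend e f 0, fun i => ?_, ?_⟩
  · by_cases hi : ∃ s, e s = i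
    · obtain ⟨s, rfl⟩ := hi
      rw [e.injective.extend_apply]
      exact hf s
    · rw [Function.extend_apply' _ _ _ hi]
      exact hp
  · exact Fintype.sum_of_injective e e.injective _ _
      (fun i hi => Function.extend_apply' _ _ _ hi) fun s => (e.injective.extend_apply f 0 s).symm

theorem rank_k_sum_kpotent_general {K n σ : Type*} [Field K] [Fintype n] [DecidableEq n]
    [Fintype σ] {k : ℕ} (hk : k ≠ 0) {ζ : σ → K} (hζ : ∀ s, ζ s ^ k = 1) {A : Matrix n n K}
    {α : σ → ℤ} (hα : ∀ s, 0 ≤ α s) (htr : A.trace = ∑ s, (α s : K) * ζ s)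
    (hrank : 2 * (A.rank : ℤ) ≤ ∑ s, α s + 1) {N : ℤ} (hN : ∑ s, α s ≤ N) :
    ∃ E : Fin N.toNat → Matrix n n K, (∀ i, E i ^ (k + 1) = E i) ∧ A = ∑ i, E i := by
  cases isEmpty_or_nonempty n
  · exact ⟨0, fun _ => Subsingleton.elim _ _, Subsingleton.elim _ _⟩
  lift α to σ → ℕ using hα
  let t : (Σ s, Fin (α s)) → K := fun x => ζ x.1
  have ht (x : Σ s, Fin (α s)) : t x ^ k = 1 := hζ x.1
  have hcard : (Fintype.card (Σ s, Fin (α s)) : ℤ) = ∑ s, (α s : ℤ) := by simp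
  have htr' : A.trace = ∑ x, t x := by simp [htr, t, Fintype.sum_sigma]
  have ht0 (x : Σ s, Fin (α s)) : t x ≠ 0 := by
    intro h
    simpa [h, hk] using ht x
  obtain ⟨E, hE, hsum⟩ : HasRankOneDecomposition A Finset.univ t := by
    refine hasRankOneDecomposition_of_trace_eq_sum (fun x _ => ht0 x) ?_ htr'
    rw [Finset.card_univ]
    lia
  have hpot (x : Σ s, Fin (α s)) : E x ^ (k + 1) = E x := by
    obtain ⟨hEx, hEtr⟩ := hE x (Finset.mem_univ x)
    rw [pow_succ_of_rank_le_one hEx, hEtr, ht, one_smul]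
  rw [hsum]
  exact exists_fin_sum_eq_of_card_le (p := fun M : Matrix n n K => M ^ (k + 1) = M)
    (zero_pow k.succ_ne_zero) hpot (by lia)

end PotentSum

section Count

/-- The paper's `γ_i` as a function of the coefficient `a = α_i`, entering the number of summands;
the divisions are exact. -/
def gamma (a : ℤ) : ℤ := if Even a then (a - 2) / 2 else (a - 3) / 2 + 3

theorem sub_two_le_two_mul_gamma (a : ℤ) : a - 2 ≤ 2 * gamma a := by
  unfold gamma
  split_ifs with h
  · obtain ⟨b, rfl⟩ := h
    lia
  · lia

theorem sum_le_sum_gamma_add_two_mul {k : ℕ} (hk : 2 ≤ k) {α : Fin k → ℤ}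
    (hα : 2 * (k : ℤ) ≤ ∑ i, α i) : ∑ i, α i ≤ (∑ i, gamma (α i) + 2) * k := by
  have hγ : ∑ i, α i - 2 * k ≤ 2 * ∑ i, gamma (α i) :=
    calc ∑ i, α i - 2 * k = ∑ i, (α i - 2) := by simp [mul_comm]
      _ ≤ ∑ i, 2 * gamma (α i) := Finset.sum_le_sum fun i _ => sub_two_le_two_mul_gamma (α i)
      _ = 2 * ∑ i, gamma (α i) := (Finset.mul_sum ..).symm
  have hprod : 0 ≤ ((k : ℤ) - 2) * (∑ i, α i - 2 * k) :=
    mul_nonneg (sub_nonneg.mpr (mod_cast hk)) (sub_nonneg.mpr hα)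
  linarith [mul_le_mul_of_nonneg_right hγ (Int.natCast_nonneg k)]

end Count

theorem rank_k_sum_kpotent (k n : ℕ) (hk : 2 ≤ k) (hn : k ≤ n)
    (ω : ℂ) (hω : ω = Complex.exp (2 * Real.pi * Complex.I / k))
    (A : Matrix (Fin n) (Fin n) ℂ)
    (α : Fin k → ℤ) (hα : ∀ i, 3 < α i)
    (htr : A.trace = ∑ i : Fin k, (α i : ℂ) * ω ^ (i : ℕ))
    (hrank : A.rank = k)
    (N : ℤ)
    (hN : N = ((∑ i : Fin k,
        if Even (α i) then (α i - 2) / 2 else (α i - 3) / 2 + 3) + 2) * (k : ℤ)) :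
    ∃ E : Fin N.toNat → Matrix (Fin n) (Fin n) ℂ,
      (∀ i, E i ^ (k + 1) = E i) ∧ A = ∑ i, E i := by
  have hk0 : k ≠ 0 := by lia
  have hωk : ω ^ k = 1 := hω ▸ (Complex.isPrimitiveRoot_exp k hk0).pow_eq_one
  have hζ (i : Fin k) : (ω ^ (i : ℕ)) ^ k = 1 := by rw [pow_right_comm, hωk, one_pow]
  have hsum : 2 * (k : ℤ) ≤ ∑ i, α i := by
    simpa [mul_comm] using Finset.sum_le_sum fun i (_ : i ∈ Finset.univ) =>
      (by linarith [hα i] : 2 ≤ α i)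
  exact rank_k_sum_kpotent_general hk0 hζ (fun i => by linarith [hα i]) htr
    (by rw [hrank]; linarith) (hN ▸ sum_le_sum_gamma_add_two_mul hk hsum)
end
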